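/- Let K be an imaginary quadratic field with discriminant D, |D| > 4. Then the class number satisfies h_K ≤ |D|/4. -/

import Mathlib

/-!
Let `ℤ[ω]` be the order of discriminant `D < 0`. A vector `v` of least norm in a nonzero ideal `J`
is primitive, so `J` has a `ℤ`-basis `v, w`, and `v (ω - m) = a w` for some integers `a ≠ 0` and
`m`. Hence `J` lies in the class of `(a, ω - m)`, which depends only on `|a|` and on `m` modulo `a`.
Replacing `w` by `w - k v` moves `m` to any `s ≡ m` modulo `a`, and minimality of `v` gives
`a² ≤ N (ω - s)`. Choosing `s` with `|2s - tr ω| ≤ |a|` in `4 N (ω - s) = (2s - tr ω)² - D` yields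
`3a² ≤ |D|`. There are therefore at most `1 + 2 + ⋯ + A = A(A + 1)/2` classes, where
`A = ⌊√(|D|/3)⌋`, and `2A(A + 1) ≤ |D|` unless `D = -3`.
-/

open Module NumberField

section PrimitiveVector

variable {A M : Type*} [CommRing A] [IsDomain A] [IsPrincipalIdealRing A] [AddCommGroup M]
  [Module A M] {v : M}

theorem isTorsionFree_quotient_span_singleton [IsTorsionFree A M]
    (hv : ∀ (g : A) (u : M), v = g • u → IsUnit g) :
    IsTorsionFree A (M ⧸ Submodule.span A {v}) := by
  refine .of_smul_eq_zero fun r x hrx => or_iff_not_imp_left.mpr fun hr => ?_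
  obtain ⟨x, rfl⟩ := Submodule.mkQ_surjective _ x
  rw [Submodule.mkQ_apply, ← Submodule.Quotient.mk_smul, Submodule.Quotient.mk_eq_zero,
    Submodule.mem_span_singleton] at hrx
  obtain ⟨n, hn⟩ := hrx
  obtain ⟨r', n', d, hrel, rfl, rfl⟩ := UniqueFactorizationMonoid.exists_reduced_factors r hr n
  have hx : n' • v = r' • x := by
    refine smul_right_injective M (left_ne_zero_of_mul hr) ?_
    simpa only [mul_smul] using hn
  obtain ⟨s, t, hst⟩ := hrel.isCoprime
  have hr' : IsUnit r' := by
    refine hv r' (s • v + t • x) ?_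
    calc v = (s * r' + t * n') • v := by rw [hst, one_smul]
      _ = r' • s • v + t • n' • v := by module
      _ = r' • (s • v + t • x) := by rw [hx]; module
  rw [Submodule.mkQ_apply, Submodule.Quotient.mk_eq_zero, Submodule.mem_span_singleton]
  exact ⟨Ring.inverse r' * n', by rw [mul_smul, hx, smul_smul, Ring.inverse_mul_cancel _ hr',
    one_smul]⟩

theorem exists_basis_apply_zero_eq [Free A M] [Module.Finite A M] {n : ℕ}
    (hn : finrank A M = n + 1) (hv : ∀ (g : A) (u : M), v = g • u → IsUnit g) :
    ∃ b : Basis (Fin (n + 1)) A M, b 0 = v := by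
  have hv0 : v ≠ 0 := fun h => not_isUnit_zero (hv 0 0 (by rw [h, smul_zero]))
  have := isTorsionFree_quotient_span_singleton hv
  let bv : Basis Unit A (Submodule.span A {v}) :=
    (Basis.singleton Unit A).map (LinearEquiv.toSpanNonzeroSingleton A M v hv0)
  have hquot : finrank A (M ⧸ Submodule.span A {v}) = n := by
    have h := Submodule.finrank_quotient_add_finrank (Submodule.span A {v})
    rw [finrank_eq_card_basis bv, hn] at h
    exact Nat.add_right_cancel h
  let e : Unit ⊕ Fin n ≃ Fin (n + 1) :=
    (Equiv.sumComm _ _).trans ((Equiv.optionEquivSumPUnit _).symm.trans (finSuccEquiv n).symm)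
  have he : e.symm 0 = .inl () := by simp [e]
  refine ⟨(bv.sumQuot (finBasisOfFinrankEq A _ hquot)).reindex e, ?_⟩
  rw [Basis.reindex_apply, he, Basis.sumQuot_inl]
  simp [bv]

theorem exists_basis_apply_zero_eq_one {B : Type*} [CommRing B] [Nontrivial B] [Algebra A B]
    [Free A B] [Module.Finite A B] {n : ℕ} (hn : finrank A B = n + 1) :
    ∃ b : Basis (Fin (n + 1)) A B, b 0 = 1 := by
  refine exists_basis_apply_zero_eq hn fun g u h => isUnit_of_map_unit (algebraMap A B) g ?_
  exact .of_mul_eq_one u (by rw [← Algebra.smul_def, h])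

end PrimitiveVector

section NormForm

variable {A B : Type*} [CommRing A] [CommRing B] [Algebra A B]

theorem two_mul_norm_eq_trace_sq_sub (b : Basis (Fin 2) A B) (z : B) :
    2 * Algebra.norm A z = Algebra.trace A B z ^ 2 - Algebra.trace A B (z * z) := by
  simp only [Algebra.norm_eq_matrix_det b, Algebra.trace_eq_matrix_trace b, map_mul,
    Matrix.det_fin_two, Matrix.trace_fin_two, Matrix.mul_apply, Fin.sum_univ_two]
  ring

theorem discr_eq_of_apply_zero_eq_one {b : Basis (Fin 2) A B} (hb : b 0 = 1) :
    Algebra.discr A b =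
      2 * Algebra.trace A B (b 1 * b 1) - Algebra.trace A B (b 1) ^ 2 := by
  have htr : Algebra.trace A B 1 = 2 := by simpa using Algebra.trace_algebraMap_of_basis b (1 : A)
  simp only [Algebra.discr_def, Matrix.det_fin_two, Algebra.traceMatrix_apply,
    Algebra.traceForm_apply, hb, one_mul, mul_one, htr]
  ring

theorem four_mul_norm_sub_algebraMap {b : Basis (Fin 2) A B} (hb : b 0 = 1) (s : A) :
    4 * Algebra.norm A (b 1 - algebraMap A B s) =
      (2 * s - Algebra.trace A B (b 1)) ^ 2 - Algebra.discr A b := by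
  have hnorm := two_mul_norm_eq_trace_sq_sub b (b 1 - algebraMap A B s)
  have htr : Algebra.trace A B (b 1 - algebraMap A B s) = Algebra.trace A B (b 1) - 2 * s := by
    rw [map_sub, Algebra.trace_algebraMap_of_basis b, Fintype.card_fin, nsmul_eq_mul, Nat.cast_two]
  have htr_sq : Algebra.trace A B ((b 1 - algebraMap A B s) * (b 1 - algebraMap A B s)) =
      Algebra.trace A B (b 1 * b 1) - 2 * s * Algebra.trace A B (b 1) + 2 * s ^ 2 := by
    have hexp : (b 1 - algebraMap A B s) * (b 1 - algebraMap A B s) =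
        b 1 * b 1 - (2 * s) • b 1 + algebraMap A B (s ^ 2) := by
      rw [Algebra.smul_def, map_mul, map_pow, map_ofNat]; ring
    rw [hexp, map_add, map_sub, map_smul, Algebra.trace_algebraMap_of_basis b, Fintype.card_fin,
      nsmul_eq_mul, Nat.cast_two, smul_eq_mul]
  rw [htr, htr_sq] at hnorm
  rw [discr_eq_of_apply_zero_eq_one hb]
  linear_combination 2 * hnorm

end NormForm

/-- `v` is a nonzero element of the ideal `J` of least norm, measured by the absolute value of
`Algebra.norm ℤ`. Dividing `J` by `v` gives a small representative of its ideal class. -/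
structure IsLeastNorm {R : Type*} [CommRing R] (J : Ideal R) (v : R) : Prop where
  mem : v ∈ J
  ne_zero : v ≠ 0
  natAbs_norm_le : ∀ u ∈ J, u ≠ 0 → (Algebra.norm ℤ v).natAbs ≤ (Algebra.norm ℤ u).natAbs

theorem exists_isLeastNorm {R : Type*} [CommRing R] {J : Ideal R} (hJ : J ≠ ⊥) :
    ∃ v, IsLeastNorm J v := by
  obtain ⟨v, hv, hmin⟩ := exists_minimalFor_of_wellFoundedLT (fun z => z ∈ J ∧ z ≠ 0)
    (fun z => (Algebra.norm ℤ z).natAbs) (Submodule.exists_mem_ne_zero_of_ne_bot hJ)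
  exact ⟨v, hv.1, hv.2, fun u hu hu0 => (le_total _ _).elim id (hmin ⟨hu, hu0⟩)⟩

namespace IsLeastNorm

variable {R : Type*} [CommRing R] [IsDomain R] [Free ℤ R] [Module.Finite ℤ R] {J : Ideal R} {v : R}

theorem natAbs_pow_le (hv : IsLeastNorm J v) {u z : R} {a : ℤ} (hu : u ∈ J) (hz : z ≠ 0)
    (h : v * z = a • u) : a.natAbs ^ finrank ℤ R ≤ (Algebra.norm ℤ z).natAbs := by
  have hu0 : u ≠ 0 := by
    rintro rfl
    exact mul_ne_zero hv.ne_zero hz (by rw [h, smul_zero])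
  have hnorm : (Algebra.norm ℤ v).natAbs * (Algebra.norm ℤ z).natAbs =
      a.natAbs ^ finrank ℤ R * (Algebra.norm ℤ u).natAbs := by
    rw [← Int.natAbs_mul, ← map_mul, h, Algebra.smul_def, map_mul, Algebra.norm_algebraMap,
      Int.natAbs_mul, Int.natAbs_pow]
  have hpos : 0 < (Algebra.norm ℤ u).natAbs :=
    Int.natAbs_pos.mpr (Algebra.norm_ne_zero_iff.mpr hu0)
  refine Nat.le_of_mul_le_mul_right ?_ hpos
  calc a.natAbs ^ finrank ℤ R * (Algebra.norm ℤ u).natAbs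
      = (Algebra.norm ℤ v).natAbs * (Algebra.norm ℤ z).natAbs := hnorm.symm
    _ ≤ (Algebra.norm ℤ u).natAbs * (Algebra.norm ℤ z).natAbs :=
      Nat.mul_le_mul_right _ (hv.natAbs_norm_le u hu hu0)
    _ = (Algebra.norm ℤ z).natAbs * (Algebra.norm ℤ u).natAbs := Nat.mul_comm _ _

theorem isUnit_of_eq_smul (hv : IsLeastNorm J v) {u : R} {g : ℤ} (hu : u ∈ J) (h : v = g • u) :
    IsUnit g := by
  have hpow : g.natAbs ^ finrank ℤ R ≤ 1 := by
    simpa using hv.natAbs_pow_le hu one_ne_zero (by rwa [mul_one])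
  have hg : g ≠ 0 := by
    rintro rfl
    exact hv.ne_zero (by rw [h, zero_smul])
  have hle : g.natAbs ≤ 1 := (Nat.le_self_pow finrank_pos.ne' _).trans hpow
  exact Int.isUnit_iff_natAbs_eq.mpr (le_antisymm hle (Int.natAbs_pos.mpr hg))

theorem exists_basis_apply_zero_eq {n : ℕ} (hv : IsLeastNorm J v) (hn : finrank ℤ R = n + 1) :
    ∃ c : Basis (Fin (n + 1)) ℤ J, (c 0 : R) = v := by
  have hJ : J ≠ ⊥ := fun h => hv.ne_zero (by simpa [h] using hv.mem)
  have hrank : finrank ℤ J = n + 1 := by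
    rw [← hn]
    exact Ideal.finrank_eq_finrank (finBasis ℤ R) J hJ
  obtain ⟨c, hc⟩ := _root_.exists_basis_apply_zero_eq (v := (⟨v, hv.mem⟩ : J)) hrank
    fun g u h => hv.isUnit_of_eq_smul u.2 (congrArg Subtype.val h)
  exact ⟨c, congrArg Subtype.val hc⟩

end IsLeastNorm

theorem exists_abs_add_two_mul_le {a : ℤ} (ha : a ≠ 0) (x : ℤ) :
    ∃ k : ℤ, |x + 2 * (k * a)| ≤ |a| := by
  have hpos : 0 < 2 * a.natAbs := by lia
  obtain ⟨s, hs⟩ : a ∣ (a.natAbs : ℤ) := Int.dvd_natAbs_self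
  have hdiv := Int.bdiv_add_bmod x (2 * a.natAbs)
  have hle := Int.le_bmod (x := x) hpos
  have hlt := Int.bmod_lt (x := x) hpos
  refine ⟨-(s * x.bdiv (2 * a.natAbs)), ?_⟩
  have hx : x + 2 * (-(s * x.bdiv (2 * a.natAbs)) * a) = x.bmod (2 * a.natAbs) := by
    rw [Nat.cast_mul, Nat.cast_two] at hdiv
    linear_combination -hdiv + 2 * x.bdiv (2 * a.natAbs) * hs
  rw [hx, abs_le, Int.abs_eq_natAbs]
  lia

theorem span_singleton_mul_span_pair_eq {R : Type*} [CommRing R] {a v w z : R} (h : v * z = a * w) :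
    Ideal.span {v} * Ideal.span {a, z} = Ideal.span {a} * Ideal.span {v, w} := by
  simp only [Ideal.span_mul_span', Set.singleton_mul, Set.image_pair, h, mul_comm v a]

theorem span_natAbs_sub_emod_natAbs {R : Type*} [CommRing R] (ω : R) {a : ℤ}
    (ha : a ≠ 0) (m : ℤ) :
    Ideal.span {(a.natAbs : R), ω - (m % a).natAbs} = Ideal.span {(a : R), ω - m} := by
  have hr : ((m % a).natAbs : R) = (m % a : ℤ) := by
    rw [← Int.cast_natCast, Int.natAbs_of_nonneg (Int.emod_nonneg m ha)]
  have hshift : ω - (m % a : ℤ) = ω - m + (m / a : ℤ) * a := by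
    nth_rw 2 [← Int.mul_ediv_add_emod m a]
    push_cast
    ring
  rw [hr, hshift, ← Int.cast_natCast]
  obtain h | h := Int.natAbs_eq a
  · rw [← h, Ideal.span_pair_add_mul_left]
  · rw [← neg_eq_iff_eq_neg.mpr h, Int.cast_neg, Ideal.span_insert_neg,
      Ideal.span_pair_add_mul_left]

section Quadratic

variable {R : Type*} [CommRing R] {b : Basis (Fin 2) ℤ R}

theorem basis_one_sub_intCast_ne_zero (hb : b 0 = 1) (s : ℤ) : b 1 - s ≠ 0 := by
  intro h
  have hcomb : b 1 - s • b 0 = 0 := by rw [hb, zsmul_one, h]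
  have hcoord : (b.repr (b 1) - s • b.repr (b 0)) 1 = 0 := by
    rw [← map_smul, ← map_sub, hcomb, map_zero, Finsupp.zero_apply]
  simp at hcoord

variable [IsDomain R] {J : Ideal R} {v w : R}

theorem IsLeastNorm.exists_mul_sub_eq_smul (hv : IsLeastNorm J v) (hb : b 0 = 1) :
    ∃ (a m : ℤ) (w : R), a ≠ 0 ∧ J = Ideal.span {v, w} ∧ v * (b 1 - m) = a • w := by
  have := Free.of_basis b
  have := Module.Finite.of_basis b
  have hrank : finrank ℤ R = 1 + 1 := finrank_eq_card_basis b
  obtain ⟨c, hc⟩ := hv.exists_basis_apply_zero_eq hrank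
  have hcoord (z : J) : (z : R) = c.repr z 0 • v + c.repr z 1 • (c 1 : R) := by
    have h := congrArg Subtype.val (c.sum_repr z)
    rw [Fin.sum_univ_two] at h
    simpa [hc] using h.symm
  let z : J := ⟨v * b 1, J.mul_mem_right _ hv.mem⟩
  have hrel : v * (b 1 - (c.repr z 0 : ℤ)) = c.repr z 1 • (c 1 : R) := by
    rw [mul_sub, sub_eq_iff_eq_add', mul_comm v (Int.cast _), ← zsmul_eq_mul]
    exact hcoord z
  refine ⟨c.repr z 1, c.repr z 0, c 1, fun ha => ?_, le_antisymm (fun x hx => ?_) ?_, hrel⟩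
  · rw [ha, zero_smul] at hrel
    exact mul_ne_zero hv.ne_zero (basis_one_sub_intCast_ne_zero hb _) hrel
  · rw [Ideal.mem_span_pair]
    exact ⟨c.repr ⟨x, hx⟩ 0, c.repr ⟨x, hx⟩ 1, by simpa using (hcoord ⟨x, hx⟩).symm⟩
  · rw [Ideal.span_le, Set.pair_subset_iff]
    exact ⟨hv.mem, (c 1).2⟩

theorem IsLeastNorm.three_mul_sq_le (hv : IsLeastNorm J v) (hb : b 0 = 1)
    (hneg : Algebra.discr ℤ b < 0) {a m : ℤ} (hw : w ∈ J) (hrel : v * (b 1 - m) = a • w) :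
    3 * a ^ 2 ≤ -Algebra.discr ℤ b := by
  have := Free.of_basis b
  have := Module.Finite.of_basis b
  obtain rfl | ha := eq_or_ne a 0
  · simpa using hneg.le
  obtain ⟨k, hk⟩ := exists_abs_add_two_mul_le ha (2 * m - Algebra.trace ℤ R (b 1))
  let s : ℤ := m + k * a
  have hshift : v * (b 1 - s) = a • (w - k • v) := by
    simp only [zsmul_eq_mul, s] at hrel ⊢
    push_cast
    linear_combination hrel
  have hlower : a ^ 2 ≤ |Algebra.norm ℤ (b 1 - s)| := by
    have h := hv.natAbs_pow_le (J.sub_mem hw (zsmul_mem hv.mem k))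
      (basis_one_sub_intCast_ne_zero hb s) hshift
    rw [finrank_eq_card_basis b, Fintype.card_fin] at h
    zify at h
    rwa [sq_abs] at h
  have hnorm : 4 * Algebra.norm ℤ (b 1 - s) =
      (2 * s - Algebra.trace ℤ R (b 1)) ^ 2 - Algebra.discr ℤ b :=
    four_mul_norm_sub_algebraMap hb s
  have hupper : (2 * s - Algebra.trace ℤ R (b 1)) ^ 2 ≤ a ^ 2 := by
    refine sq_le_sq.mpr (le_of_eq_of_le (congrArg _ ?_) hk)
    ring
  rw [abs_of_nonneg (by nlinarith [sq_nonneg (2 * s - Algebra.trace ℤ R (b 1))])] at hlower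
  linarith

end Quadratic

section ClassGroup

variable {R : Type*} [CommRing R] [IsDedekindDomain R] {b : Basis (Fin 2) ℤ R}

theorem exists_mk0_span_eq (hb : b 0 = 1) (hneg : Algebra.discr ℤ b < 0) (C : ClassGroup R) :
    ∃ a r : ℕ, r < a ∧ 3 * a ^ 2 ≤ (Algebra.discr ℤ b).natAbs ∧
      ∃ hI : Ideal.span {(a : R), b 1 - r} ∈ nonZeroDivisors (Ideal R),
        ClassGroup.mk0 ⟨_, hI⟩ = C := by
  obtain ⟨⟨J, hJ⟩, rfl⟩ := ClassGroup.mk0_surjective C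
  obtain ⟨v, hv⟩ := exists_isLeastNorm (nonZeroDivisors.ne_zero hJ)
  obtain ⟨a, m, w, ha, rfl, hrel⟩ := hv.exists_mul_sub_eq_smul hb
  have hbound := hv.three_mul_sq_le hb hneg (Ideal.subset_span (by simp)) hrel
  refine ⟨a.natAbs, (m % a).natAbs, ?_, ?_, ?_⟩
  · zify
    rw [abs_of_nonneg (Int.emod_nonneg m ha)]
    exact Int.emod_lt_abs m ha
  · zify
    rwa [sq_abs, abs_of_neg hneg]
  have hω := basis_one_sub_intCast_ne_zero hb m
  have ha0 : (a : R) ≠ 0 := fun h => mul_ne_zero hv.ne_zero hω (by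
    rw [hrel, zsmul_eq_mul, h, zero_mul])
  simp only [span_natAbs_sub_emod_natAbs _ ha]
  have hmem : b 1 - (m : R) ∈ Ideal.span {(a : R), b 1 - m} := Ideal.subset_span (by simp)
  have hI : Ideal.span {(a : R), b 1 - m} ≠ ⊥ := fun h => hω (by rwa [h, Ideal.mem_bot] at hmem)
  refine ⟨mem_nonZeroDivisors_of_ne_zero hI, ?_⟩
  rw [ClassGroup.mk0_eq_mk0_iff]
  exact ⟨v, a, hv.ne_zero, ha0, span_singleton_mul_span_pair_eq (by rw [hrel, zsmul_eq_mul])⟩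

theorem card_classGroup_le_choose [Fintype (ClassGroup R)] (hb : b 0 = 1)
    (hneg : Algebra.discr ℤ b < 0) :
    Fintype.card (ClassGroup R) ≤ (Nat.sqrt ((Algebra.discr ℤ b).natAbs / 3) + 1).choose 2 := by
  let S : Finset (Σ _ : ℕ, ℕ) :=
    (Finset.range (Nat.sqrt ((Algebra.discr ℤ b).natAbs / 3) + 1)).sigma Finset.range
  have hS : S.card = (Nat.sqrt ((Algebra.discr ℤ b).natAbs / 3) + 1).choose 2 := by
    simp [S, Finset.card_sigma, Finset.sum_range_id, Nat.choose_two_right]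
  rw [← hS, ← Finset.card_univ]
  refine Finset.card_le_card_of_forall_subsingleton
    (fun C p => ∃ hI : Ideal.span {(p.1 : R), b 1 - p.2} ∈ nonZeroDivisors (Ideal R),
        ClassGroup.mk0 ⟨_, hI⟩ = C) (fun C _ => ?_) ?_
  · obtain ⟨a, r, hra, ha, hC⟩ := exists_mk0_span_eq hb hneg C
    refine ⟨⟨a, r⟩, ?_, hC⟩
    simp only [S, Finset.mem_sigma, Finset.mem_range, Nat.lt_succ_iff, Nat.le_sqrt']
    lia
  · rintro p - C ⟨-, hI, rfl⟩ C' ⟨-, hI', rfl⟩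
    rfl

end ClassGroup

theorem four_mul_choose_sqrt_le {d : ℕ} (hd : 4 ≤ d) :
    4 * (Nat.sqrt (d / 3) + 1).choose 2 ≤ d := by
  have hsq : 3 * Nat.sqrt (d / 3) ^ 2 ≤ d := by
    have := Nat.sqrt_le' (d / 3)
    lia
  have hchoose : 2 * (Nat.sqrt (d / 3) + 1).choose 2 ≤
      Nat.sqrt (d / 3) ^ 2 + Nat.sqrt (d / 3) := by
    rw [Nat.choose_two_right, Nat.add_sub_cancel]
    exact (Nat.mul_div_le _ _).trans_eq (by ring)
  generalize Nat.sqrt (d / 3) = A at hsq hchoose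
  obtain hA | hA := Nat.lt_or_ge A 2
  · interval_cases A <;> lia
  · nlinarith

section NumberField

variable (K : Type*) [Field K]

theorem isTotallyComplex_of_isEmpty_ringHom_real [IsEmpty (K →+* ℝ)] : IsTotallyComplex K where
  isComplex _ := InfinitePlace.not_isReal_iff_isComplex.mp fun hv =>
    isEmptyElim (InfinitePlace.embedding_of_isReal hv)

variable [NumberField K]

theorem discr_neg_of_isTotallyComplex [IsTotallyComplex K] (hdeg : finrank ℚ K = 2) :
    discr K < 0 := by
  have hplaces : InfinitePlace.nrComplexPlaces K = 1 := by
    have := IsTotallyComplex.finrank K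
    lia
  rw [← Int.sign_eq_neg_one_iff_neg, sign_discr, hplaces, pow_one]

theorem classNumber_le_choose_of_isTotallyComplex [IsTotallyComplex K] (hdeg : finrank ℚ K = 2) :
    classNumber K ≤ (Nat.sqrt ((discr K).natAbs / 3) + 1).choose 2 := by
  obtain ⟨b, hb⟩ := exists_basis_apply_zero_eq_one ((RingOfIntegers.rank K).trans hdeg)
  rw [← discr_eq_discr K b]
  exact card_classGroup_le_choose hb (discr_eq_discr K b ▸ discr_neg_of_isTotallyComplex K hdeg)

theorem classNumber_le_discr_div_four_general [IsTotallyComplex K] (hdeg : finrank ℚ K = 2)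
    (hD : discr K ≠ -3) : 4 * classNumber K ≤ (discr K).natAbs := by
  have hle := classNumber_le_choose_of_isTotallyComplex K hdeg
  have hD3 : 3 ≤ (discr K).natAbs := by
    by_contra! h
    rw [Nat.div_eq_of_lt h] at hle
    exact (Fintype.card_pos (α := ClassGroup (𝓞 K))).not_ge hle
  have hneg := discr_neg_of_isTotallyComplex K hdeg
  exact (Nat.mul_le_mul_left 4 hle).trans (four_mul_choose_sqrt_le (by lia))

end NumberField

/-- For an imaginary quadratic field `K` with discriminant `D`, `|D| > 4`, the
class number satisfies `h_K ≤ |D|/4`. -/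
theorem classNumber_le_discr_div_four (K : Type*) [Field K] [NumberField K]
    (hdeg : Module.finrank ℚ K = 2) (himag : ∀ _ : K →+* ℝ, False)
    (hD : 4 < (NumberField.discr K).natAbs) :
    4 * NumberField.classNumber K ≤ (NumberField.discr K).natAbs := by
  have : IsEmpty (K →+* ℝ) := ⟨himag⟩
  have := isTotallyComplex_of_isEmpty_ringHom_real K
  exact classNumber_le_discr_div_four_general K hdeg (by lia)
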